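/- Suppose L is a metric flag labeled triangulation of the 2-sphere. If D₁ and D₂ are two distinct Seifert subcomplexes of L, then no 2-simplex of L is contained in both D₁ and D₂. -/

import Mathlib

open Geometry

/-- The ambient space for our simplicial complexes. -/
abbrev E3 : Type := EuclideanSpace ℝ (Fin 3)

noncomputable instance : DecidableEq E3 := Classical.decEq _

namespace CoxOrb

variable (L : SimplicialComplex ℝ E3) (m : E3 → E3 → ℕ)

/-- `L` is a labeled triangulation of the 2-sphere with edge labeling `m`:
`L` is finite, its underlying space is homeomorphic to the 2-sphere, and `m`
is symmetric with `m s t ≥ 2` on every edge `{s, t}` of `L`. -/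
structure IsLabeledS2 : Prop where
  finite : L.faces.Finite
  sphere : Nonempty (L.space ≃ₜ (Metric.sphere (0 : E3) 1 : Set E3))
  symm : ∀ s t : E3, m s t = m t s
  two_le : ∀ s t : E3, s ≠ t → ({s, t} : Finset E3) ∈ L.faces → 2 ≤ m s t

/-- `L` with labeling `m` is metric flag: three pairwise-joined vertices span a
2-simplex iff the corresponding angle sum `π/m_st + π/m_tu + π/m_us` exceeds `π`. -/
def MetricFlag : Prop :=
  ∀ s t u : E3, s ≠ t → t ≠ u → s ≠ u →
    ({s, t} : Finset E3) ∈ L.faces → ({t, u} : Finset E3) ∈ L.faces →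
    ({s, u} : Finset E3) ∈ L.faces →
    (({s, t, u} : Finset E3) ∈ L.faces ↔
      1 / (m s t : ℝ) + 1 / (m t u : ℝ) + 1 / (m u s : ℝ) > 1)

/-- The link of a vertex `s`, as a set of faces of `L`. -/
def link (s : E3) : Set (Finset E3) :=
  {F | F ∈ L.faces ∧ s ∉ F ∧ insert s F ∈ L.faces}

/-- The closed star of a vertex `s`: all faces of `L` contained in some face
containing `s`. -/
def star (s : E3) : Set (Finset E3) :=
  {F | F ∈ L.faces ∧ ∃ G ∈ L.faces, s ∈ G ∧ F ⊆ G}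

/-- The vertices of the link of `s`. -/
def linkVerts (s : E3) : Set E3 :=
  {v | v ≠ s ∧ ({s, v} : Finset E3) ∈ L.faces}

/-- A set of faces `A` is a full subcomplex of `L`: every face of `L` all of
whose vertices are vertices of `A` belongs to `A`. -/
def IsFullSubcomplex (A : Set (Finset E3)) : Prop :=
  A ⊆ L.faces ∧ ∀ F ∈ L.faces, (∀ v ∈ F, ({v} : Finset E3) ∈ A) → F ∈ A

/-- `s` is a 3-Euclidean vertex of `L`: it has valence three and the labels on
the three edges of its link have reciprocals summing to one. -/
def IsThreeEuclidean (s : E3) : Prop :=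
  ({s} : Finset E3) ∈ L.faces ∧
  ∃ s₀ s₁ s₂ : E3, s₀ ≠ s₁ ∧ s₁ ≠ s₂ ∧ s₀ ≠ s₂ ∧
    linkVerts L s = {s₀, s₁, s₂} ∧
    1 / (m s₀ s₁ : ℝ) + 1 / (m s₁ s₂ : ℝ) + 1 / (m s₂ s₀ : ℝ) = 1

/-- `s` is a 4-Euclidean vertex of `L`: it has valence four, its link is the
4-circuit on `v 0, v 1, v 2, v 3` (in cyclic order), and the labels on the
edges of the link are all `2`. -/
def IsFourEuclidean (s : E3) : Prop :=
  ({s} : Finset E3) ∈ L.faces ∧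
  ∃ v : Fin 4 → E3, Function.Injective v ∧
    linkVerts L s = {v 0, v 1, v 2, v 3} ∧
    (∀ i : Fin 4, ({s, v i, v (i + 1)} : Finset E3) ∈ L.faces) ∧
    (∀ i : Fin 4, m (v i) (v (i + 1)) = 2)

/-- `L` is the boundary complex of a 3-simplex: four pairwise-joined vertices
spanning four 2-simplices. -/
def IsBoundaryOfThreeSimplex : Prop :=
  ∃ a b c d : E3, a ≠ b ∧ a ≠ c ∧ a ≠ d ∧ b ≠ c ∧ b ≠ d ∧ c ≠ d ∧
    (∀ v : E3, ({v} : Finset E3) ∈ L.faces ↔ v = a ∨ v = b ∨ v = c ∨ v = d) ∧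
    ({a, b, c} : Finset E3) ∈ L.faces ∧ ({a, b, d} : Finset E3) ∈ L.faces ∧
    ({a, c, d} : Finset E3) ∈ L.faces ∧ ({b, c, d} : Finset E3) ∈ L.faces

/-- `L` is the suspension of a 3-gon. -/
def IsSuspensionOfThreeGon : Prop :=
  ∃ t t' s₀ s₁ s₂ : E3, [t, t', s₀, s₁, s₂].Pairwise (· ≠ ·) ∧
    (∀ v : E3, ({v} : Finset E3) ∈ L.faces ↔ v = t ∨ v = t' ∨ v = s₀ ∨ v = s₁ ∨ v = s₂) ∧
    ({s₀, s₁} : Finset E3) ∈ L.faces ∧ ({s₁, s₂} : Finset E3) ∈ L.faces ∧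
    ({s₀, s₂} : Finset E3) ∈ L.faces ∧
    ({t, s₀} : Finset E3) ∈ L.faces ∧ ({t, s₁} : Finset E3) ∈ L.faces ∧
    ({t, s₂} : Finset E3) ∈ L.faces ∧
    ({t', s₀} : Finset E3) ∈ L.faces ∧ ({t', s₁} : Finset E3) ∈ L.faces ∧
    ({t', s₂} : Finset E3) ∈ L.faces ∧
    ({t, t'} : Finset E3) ∉ L.faces

/-- The simplicial join of the subcomplex `Z` with the two points `t, t'`. -/
def joinSusp (Z : Set (Finset E3)) (t t' : E3) : Set (Finset E3) :=
  Z ∪ {{t}, {t'}} ∪ ((fun F => insert t F) '' Z) ∪ ((fun F => insert t' F) '' Z)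

/-- `T` is the right-angled suspension in `L` of the subcomplex `Z` with
suspension points `t, t'` (not joined by an edge of `T`): every edge from a
suspension point to a vertex of `Z` is labeled `2`. -/
structure IsRASuspData (T Z : Set (Finset E3)) (t t' : E3) : Prop where
  subset : T ⊆ L.faces
  zsubset : Z ⊆ L.faces
  zdown : ∀ F ∈ Z, ∀ G : Finset E3, G ⊆ F → G.Nonempty → G ∈ Z
  znonempty : Z.Nonempty
  tne : t ≠ t'
  t_notin : ∀ F ∈ Z, t ∉ F
  t'_notin : ∀ F ∈ Z, t' ∉ F
  labels : ∀ v : E3, ({v} : Finset E3) ∈ Z → m t v = 2 ∧ m t' v = 2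
  eq : T = joinSusp Z t t'

/-- `T` is a right-angled suspension in `L`. -/
def IsRASusp (T : Set (Finset E3)) : Prop :=
  ∃ Z t t', IsRASuspData L m T Z t t'

/-- The base `Z` of the suspension is neither a single vertex nor a single
edge, so that the suspension is infinite. -/
def InfiniteBase (Z : Set (Finset E3)) : Prop :=
  (¬ ∃ v : E3, Z = {({v} : Finset E3)}) ∧
  (¬ ∃ u v : E3, u ≠ v ∧ Z = {({u} : Finset E3), ({v} : Finset E3), ({u, v} : Finset E3)})

/-- `T` is an infinite, maximal right-angled suspension in `L`: it is an
RA-suspension of a full subcomplex which is neither a vertex nor an edge, and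
`T` is not properly contained in another RA-suspension. -/
def IsInfMaxRASusp (T : Set (Finset E3)) : Prop :=
  (∃ Z t t', IsRASuspData L m T Z t t' ∧ InfiniteBase Z ∧ IsFullSubcomplex L Z) ∧
  ∀ T', IsRASusp L m T' → T ⊆ T' → T = T'

/-- `v 0, v 1, v 2, v 3` (in cyclic order) form a Euclidean 4-circuit of `L`:
all four edge labels are `2` and the circuit is not the boundary of the union
of two 2-simplices of `L` sharing an edge. -/
def IsEuclidean4Circuit (v : Fin 4 → E3) : Prop :=
  Function.Injective v ∧
  (∀ i : Fin 4, ({v i, v (i + 1)} : Finset E3) ∈ L.faces) ∧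
  (∀ i : Fin 4, m (v i) (v (i + 1)) = 2) ∧
  ¬ ((({v 0, v 1, v 2} : Finset E3) ∈ L.faces ∧ ({v 0, v 2, v 3} : Finset E3) ∈ L.faces) ∨
     (({v 1, v 2, v 3} : Finset E3) ∈ L.faces ∧ ({v 0, v 1, v 3} : Finset E3) ∈ L.faces))

/-- The subcomplex consisting of the vertices and edges of the 4-circuit `v`. -/
def circuitComplex (v : Fin 4 → E3) : Set (Finset E3) :=
  {F | (∃ i : Fin 4, F = {v i}) ∨ (∃ i : Fin 4, F = {v i, v (i + 1)})}

/-- `T` is the right-angled cone on a Euclidean 4-circuit: the closed star of a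
vertex `c` of valence four whose link is a Euclidean 4-circuit, all four edges
containing `c` being labeled `2`. -/
def IsRAConeOn4Circuit (T : Set (Finset E3)) : Prop :=
  ∃ (c : E3) (v : Fin 4 → E3), IsEuclidean4Circuit L m v ∧
    linkVerts L c = {v 0, v 1, v 2, v 3} ∧
    (∀ i : Fin 4, ({c, v i, v (i + 1)} : Finset E3) ∈ L.faces) ∧
    (∀ i : Fin 4, m c (v i) = 2) ∧
    T = star L c

/-- The generating relation for Seifert subcomplexes: two infinite, maximal
RA-suspensions whose intersection is a Euclidean 4-circuit. -/
def SeifertRel (S S' : Set (Finset E3)) : Prop :=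
  IsInfMaxRASusp L m S ∧ IsInfMaxRASusp L m S' ∧
  ∃ v : Fin 4 → E3, IsEuclidean4Circuit L m v ∧ S ∩ S' = circuitComplex v

/-- `D` is a Seifert subcomplex of `L`: the union of the members of an
equivalence class of infinite, maximal RA-suspensions under the equivalence
relation generated by `SeifertRel`. -/
def IsSeifertSubcomplex (D : Set (Finset E3)) : Prop :=
  ∃ S₀, IsInfMaxRASusp L m S₀ ∧
    D = ⋃₀ {S | IsInfMaxRASusp L m S ∧ Relation.EqvGen (SeifertRel L m) S₀ S}

end CoxOrb

namespace CoxOrb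

/-- Continuous logarithm of a nonvanishing function on a simply connected space. -/
theorem exists_clog {A : Type} [TopologicalSpace A] [SimplyConnectedSpace A]
    [LocallyPathConnectedSpace A] (g : A → ℂ) (hg : Continuous g) (h0 : ∀ x, g x ≠ 0) :
    ∃ l : A → ℂ, Continuous l ∧ ∀ x, Complex.exp (l x) = g x := by
  obtain ⟨a₀⟩ : Nonempty A := inferInstance
  let f : C(A, {z : ℂ // z ≠ 0}) := ⟨fun x => ⟨g x, h0 x⟩, by fun_prop⟩
  obtain ⟨F, ⟨-, hF⟩, -⟩ := Complex.isCoveringMap_exp.existsUnique_continuousMap_lifts f a₀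
    (Complex.log (g a₀)) (by apply Subtype.ext; simp [f, Complex.exp_log (h0 a₀)])
  refine ⟨F, F.continuous, fun x => ?_⟩
  have := congrFun hF x
  simpa [f] using congrArg Subtype.val this

/-- Two logs of proportional functions have the same increment. -/
theorem clog_unique (l₁ l₂ : ℝ → ℂ) (h₁ : Continuous l₁) (h₂ : Continuous l₂) (c : ℂ)
    (h : ∀ x, Complex.exp (l₁ x) = c * Complex.exp (l₂ x)) : l₁ 1 - l₁ 0 = l₂ 1 - l₂ 0 := by
  have key := Complex.isCoveringMap_exp.const_of_comp (g := fun x => l₁ x - l₂ x)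
    (h₁.sub h₂) (fun a a' => by
      apply Subtype.ext
      simp only [Complex.exp_sub, h]
      rw [mul_div_cancel_right₀ _ (Complex.exp_ne_zero _),
        mul_div_cancel_right₀ _ (Complex.exp_ne_zero _)]) 1 0

  linear_combination key

open Classical in
/-- The change of the logarithm of `e - v` along `e`. -/
noncomputable def ang (v : ℂ) (e : ℝ → ℂ) : ℂ :=
  if h : ∃ l : ℝ → ℂ, Continuous l ∧ ∀ x, Complex.exp (l x) = e x - v then
    h.choose 1 - h.choose 0 else 0

theorem ang_eq (v : ℂ) (e l : ℝ → ℂ) (c : ℂ) (hc : c ≠ 0) (hl : Continuous l)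
    (h : ∀ x, Complex.exp (l x) = c * (e x - v)) : ang v e = l 1 - l 0 := by
  have hex : ∃ l : ℝ → ℂ, Continuous l ∧ ∀ x, Complex.exp (l x) = e x - v := by
    refine ⟨fun x => l x - Complex.log c, by fun_prop, fun x => ?_⟩
    rw [Complex.exp_sub, h, Complex.exp_log hc]; field_simp
  rw [ang, dif_pos hex]
  exact clog_unique _ _ hex.choose_spec.1 hl c⁻¹ fun x => by
    rw [hex.choose_spec.2, h]; field_simp

theorem ang_exp (v : ℂ) (e : ℝ → ℂ) (he : Continuous e) (h : ∀ x, e x ≠ v) :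
    Complex.exp (ang v e) * (e 0 - v) = e 1 - v := by
  obtain ⟨l, hl, hl'⟩ := exists_clog (fun x => e x - v) (by fun_prop)
    (fun x => sub_ne_zero.2 (h x))
  rw [ang_eq v e l 1 one_ne_zero hl (by simpa using hl'), Complex.exp_sub, hl', hl']
  have := sub_ne_zero.2 (h 0)
  field_simp

theorem ang_int (v : ℂ) (e : ℝ → ℂ) (he : Continuous e) (h : ∀ x, e x ≠ v) (x y : ℂ)
    (hx : Complex.exp x = e 0 - v) (hy : Complex.exp y = e 1 - v) :
    ∃ n : ℤ, ang v e = y - x + n * (2 * Real.pi * Complex.I) := by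
  have := ang_exp v e he h
  rw [← hx, ← hy, ← Complex.exp_add, Complex.exp_eq_exp_iff_exists_int] at this
  obtain ⟨n, hn⟩ := this
  exact ⟨n, by linear_combination hn⟩

theorem ang_square (e e' : ℝ → ℂ) (he : Continuous e) (he' : Continuous e')
    (h : ∀ s t, e s ≠ e' t) :
    ang (e' 0) e + ang (e 1) e' = ang (e 0) e' + ang (e' 1) e := by
  obtain ⟨H, hH, hH'⟩ := exists_clog (fun x : ℝ × ℝ => e x.1 - e' x.2) (by fun_prop)
    (fun x => sub_ne_zero.2 (h _ _))
  rw [ang_eq (e' 0) e (fun s => H (s, 0)) 1 one_ne_zero (by fun_prop) (by simp [hH']),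
    ang_eq (e' 1) e (fun s => H (s, 1)) 1 one_ne_zero (by fun_prop) (by simp [hH']),
    ang_eq (e 0) e' (fun s => H (0, s)) (-1) (by simp) (by fun_prop) (by simp [hH']),
    ang_eq (e 1) e' (fun s => H (1, s)) (-1) (by simp) (by fun_prop) (by simp [hH'])]
  ring

/-- `K_{3,3}` is not planar. -/
theorem k33_plane (P Q : Fin 3 → ℂ) (γ : Fin 3 → Fin 3 → ℝ → ℂ)
    (hc : ∀ i j, Continuous (γ i j)) (h0 : ∀ i j, γ i j 0 = P i) (h1 : ∀ i j, γ i j 1 = Q j)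
    (hd : ∀ i j k l, i ≠ k → j ≠ l → ∀ s t, γ i j s ≠ γ k l t) : False := by
  have other : ∀ l : Fin 3, ∃ j, j ≠ l := by decide
  have hP : ∀ i k l s, i ≠ k → γ k l s ≠ P i := by
    intro i k l s hik
    obtain ⟨j, hj⟩ := other l
    rw [← h0 i j]; exact hd _ _ _ _ hik.symm hj.symm _ _
  have hQ : ∀ j k l s, j ≠ l → γ k l s ≠ Q j := by
    intro j k l s hjl
    obtain ⟨i, hi⟩ := other k
    rw [← h1 i j]; exact hd _ _ _ _ hi.symm hjl.symm _ _
  have hPP : ∀ i k, i ≠ k → P i ≠ P k := fun i k hik => by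
    rw [← h0 i 0]; exact hP k i 0 0 hik.symm
  have hQQ : ∀ i k, i ≠ k → Q i ≠ Q k := fun i k hik => by
    rw [← h1 0 i]; exact hQ k 0 i 1 hik.symm
  have hQP : ∀ j i, Q j ≠ P i := fun j i => by
    obtain ⟨k, hk⟩ := other i
    rw [← h1 k j]; exact hP i k j 1 hk.symm
  have neg : ∀ z : ℂ, z ≠ 0 → Complex.exp (Complex.log z + Real.pi * Complex.I) = -z := by
    intro z hz
    rw [Complex.exp_add, Complex.exp_log hz, Complex.exp_pi_mul_I]; ring
  have main : ∀ R : Fin 3 → ℂ, (∀ i k, i ≠ k → R i ≠ R k) → ∃ φ : Fin 3 → Fin 3 → ℂ,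
      (∀ i k, i ≠ k → Complex.exp (φ i k) = R i - R k) ∧
      ∀ i k, i < k → φ k i = φ i k + Real.pi * Complex.I := by
    intro R hR
    refine ⟨fun i k => if i < k then Complex.log (R i - R k) else
      Complex.log (R k - R i) + Real.pi * Complex.I, fun i k hik => ?_, fun i k hik => ?_⟩
    · by_cases h : i < k
      · simp only [h, if_true]; exact Complex.exp_log (sub_ne_zero.2 (hR _ _ hik))
      · simp only [h, if_false]; rw [neg _ (sub_ne_zero.2 (hR _ _ hik.symm))]; ring
    · simp [hik, hik.le.not_gt]
  obtain ⟨φ, hφ, hφ'⟩ := main P hPP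
  obtain ⟨ψ, hψ, hψ'⟩ := main Q hQQ
  have hN1 : ∀ i k l, ∃ n : ℤ, i ≠ k → ang (P i) (γ k l) =
      Complex.log (Q l - P i) - φ k i + n * (2 * Real.pi * Complex.I) := by
    intro i k l
    by_cases hik : i = k
    · exact ⟨0, fun h => (h hik).elim⟩
    · obtain ⟨n, hn⟩ := ang_int (P i) (γ k l) (hc _ _) (fun x => hP _ _ _ _ hik) (φ k i)
        (Complex.log (Q l - P i)) (by rw [h0]; exact hφ _ _ (Ne.symm hik))
        (by rw [h1]; exact Complex.exp_log (sub_ne_zero.2 (hQP _ _)))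
      exact ⟨n, fun _ => hn⟩
  have hN2 : ∀ j k l, ∃ n : ℤ, j ≠ l → ang (Q j) (γ k l) =
      ψ l j - (Complex.log (Q j - P k) + Real.pi * Complex.I)
        + n * (2 * Real.pi * Complex.I) := by
    intro j k l
    by_cases hjl : j = l
    · exact ⟨0, fun h => (h hjl).elim⟩
    · obtain ⟨n, hn⟩ := ang_int (Q j) (γ k l) (hc _ _) (fun x => hQ _ _ _ _ hjl)
        (Complex.log (Q j - P k) + Real.pi * Complex.I) (ψ l j)
        (by rw [h0, neg _ (sub_ne_zero.2 (hQP _ _))]; ring)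
        (by rw [h1]; exact hψ _ _ (Ne.symm hjl))
      exact ⟨n, fun _ => hn⟩
  choose N1 hN1 using hN1
  choose N2 hN2 using hN2
  have hpi : (2 * Real.pi * Complex.I : ℂ) ≠ 0 := Complex.two_pi_I_ne_zero
  have sq : ∀ i j k l, i < k → j ≠ l →
      N1 k i j + N2 j k l - N1 i k l - N2 l i j + (if j < l then 1 else 0) = 0 := by
    intro i j k l hik hjl
    have h := ang_square (γ i j) (γ k l) (hc _ _) (hc _ _) (hd i j k l hik.ne hjl)
    rw [h0, h1, h0, h1, hN1 _ _ _ hik.ne', hN1 _ _ _ hik.ne, hN2 _ _ _ hjl,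
      hN2 _ _ _ hjl.symm, hφ' _ _ hik] at h
    have : ((N1 k i j + N2 j k l - N1 i k l - N2 l i j + (if j < l then 1 else 0) : ℤ) : ℂ)
        * (2 * Real.pi * Complex.I) = 0 := by
      rcases lt_or_gt_of_ne hjl with hlt | hlt
      · rw [hψ' _ _ hlt] at h
        simp only [hlt, if_true]; push_cast
        linear_combination h
      · rw [hψ' _ _ hlt] at h
        simp only [hlt.le.not_gt, if_false]; push_cast
        linear_combination h
    exact_mod_cast (mul_eq_zero.1 this).resolve_right hpi
  have s1 : ∀ i k, i < k → _ := fun i k hik => And.intro (sq i 0 k 1 hik (by decide))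
    (And.intro (sq i 0 k 2 hik (by decide)) (And.intro (sq i 1 k 2 hik (by decide))
    (And.intro (sq i 1 k 0 hik (by decide)) (And.intro (sq i 2 k 0 hik (by decide))
      (sq i 2 k 1 hik (by decide))))))
  have a1 := s1 0 1 (by decide)
  have a2 := s1 0 2 (by decide)
  have a3 := s1 1 2 (by decide)
  simp at a1 a2 a3
  omega

end CoxOrb

namespace CoxOrb

/-- `w` is a system of barycentric coordinates of `x` supported on `s`. -/
structure OnFace (s : Finset E3) (x : E3) (w : E3 → ℝ) : Prop where
  nonneg : ∀ v, 0 ≤ w v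
  supp : ∀ v, w v ≠ 0 → v ∈ s
  sum : ∑ v ∈ s, w v = 1
  comb : ∑ v ∈ s, w v • v = x

/-- `w` is the system of barycentric coordinates of `x` in `L`. -/
def Bary (L : SimplicialComplex ℝ E3) (x : E3) (w : E3 → ℝ) : Prop :=
  ∃ s ∈ L.faces, OnFace s x w

theorem OnFace.mem {s : Finset E3} {x : E3} {w : E3 → ℝ} (h : OnFace s x w) :
    x ∈ convexHull ℝ (s : Set E3) := by
  rw [← h.comb]
  exact (convex_convexHull ℝ _).sum_mem (fun i _ => h.nonneg i) h.sum
    (fun i hi => subset_convexHull ℝ _ hi)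

theorem OnFace.mono {s t : Finset E3} {x : E3} {w : E3 → ℝ} (h : OnFace s x w) (hst : s ⊆ t) :
    OnFace t x w := by
  have h0 : ∀ v ∈ t, v ∉ s → w v = 0 := fun v _ hv => by
    by_contra h'; exact hv (h.supp v h')
  refine ⟨h.nonneg, fun v hv => hst (h.supp v hv), ?_, ?_⟩
  · rw [← Finset.sum_subset hst h0]; exact h.sum
  · rw [← Finset.sum_subset hst (fun v hv hv' => by rw [h0 v hv hv', zero_smul])]; exact h.comb

theorem OnFace.unique {L : SimplicialComplex ℝ E3} {s : Finset E3} {x : E3} {w w' : E3 → ℝ}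
    (hs : s ∈ L.faces) (h : OnFace s x w) (h' : OnFace s x w') : w = w' := by
  have hi := affineIndependent_iff.1 (L.indep hs) Finset.univ (fun v => w v - w' v) (by
    rw [Finset.sum_coe_sort s (fun v => w v - w' v), Finset.sum_sub_distrib, h.sum, h'.sum,
      sub_self]) (by
    rw [Finset.sum_coe_sort s (fun v => (w v - w' v) • v)]
    simp only [sub_smul]
    rw [Finset.sum_sub_distrib, h.comb, h'.comb, sub_self])
  funext v
  by_cases hv : v ∈ s
  · have := hi ⟨v, hv⟩ (Finset.mem_univ _)
    simpa [sub_eq_zero] using this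
  · have h1 : w v = 0 := by by_contra h1; exact hv (h.supp v h1)
    have h2 : w' v = 0 := by by_contra h1; exact hv (h'.supp v h1)
    rw [h1, h2]

theorem exists_onFace {s : Finset E3} {x : E3} (h : x ∈ convexHull ℝ (s : Set E3)) :
    ∃ w, OnFace s x w := by
  rw [Finset.mem_convexHull'] at h
  obtain ⟨w, h0, h1, h2⟩ := h
  refine ⟨fun v => if v ∈ s then w v else 0, fun v => ?_, fun v hv => ?_, ?_, ?_⟩
  · split_ifs with hv
    · exact h0 v hv
    · exact le_rfl
  · by_contra hv'; simp [hv'] at hv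
  · rw [← h1]; exact Finset.sum_congr rfl fun v hv => by simp [hv]
  · rw [← h2]; exact Finset.sum_congr rfl fun v hv => by simp [hv]

theorem Bary.unique {L : SimplicialComplex ℝ E3} {x : E3} {w w' : E3 → ℝ}
    (h : Bary L x w) (h' : Bary L x w') : w = w' := by
  obtain ⟨s, hs, h⟩ := h
  obtain ⟨t, ht, h'⟩ := h'
  have hx := L.inter_subset_convexHull hs ht ⟨h.mem, h'.mem⟩
  rw [← Finset.coe_inter] at hx
  obtain ⟨u, hu⟩ := exists_onFace hx
  rw [OnFace.unique hs h (hu.mono Finset.inter_subset_left),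
    OnFace.unique ht h' (hu.mono Finset.inter_subset_right)]

theorem Bary.mem_space {L : SimplicialComplex ℝ E3} {x : E3} {w : E3 → ℝ}
    (h : Bary L x w) : x ∈ L.space := by
  obtain ⟨s, hs, h⟩ := h
  exact SimplicialComplex.convexHull_subset_space hs h.mem

theorem Bary.exists_ne {L : SimplicialComplex ℝ E3} {x : E3} {w : E3 → ℝ}
    (h : Bary L x w) : ∃ y, w y ≠ 0 := by
  obtain ⟨s, hs, h⟩ := h
  by_contra! h0
  have := h.sum
  simp [h0] at this

theorem OnFace.seg {s : Finset E3} {x y : E3} {w w' : E3 → ℝ} (h : OnFace s x w)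
    (h' : OnFace s y w') (a b : ℝ) (ha : 0 ≤ a) (hb : 0 ≤ b) (hab : a + b = 1) :
    OnFace s (a • x + b • y) (fun v => a * w v + b * w' v) := by
  refine ⟨fun v => ?_, fun v hv => ?_, ?_, ?_⟩
  · have := h.nonneg v; have := h'.nonneg v; positivity
  · by_contra hs
    have h1 : w v = 0 := by by_contra h1; exact hs (h.supp v h1)
    have h2 : w' v = 0 := by by_contra h1; exact hs (h'.supp v h1)
    simp [h1, h2] at hv
  · rw [Finset.sum_add_distrib, ← Finset.mul_sum, ← Finset.mul_sum, h.sum, h'.sum]; linarith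
  · simp only [add_smul, mul_smul]
    rw [Finset.sum_add_distrib, ← Finset.smul_sum, ← Finset.smul_sum, h.comb, h'.comb]

theorem onFace_vertex {s : Finset E3} {v : E3} (hv : v ∈ s) :
    OnFace s v (fun y => if y = v then 1 else 0) := by
  refine ⟨fun y => ?_, fun y hy => ?_, ?_, ?_⟩
  · split_ifs <;> norm_num
  · by_cases h : y = v
    · exact h ▸ hv
    · simp [h] at hy
  · simp [hv]
  · simp [hv]

/-- The points of `L` whose barycentric coordinates lie in `B`. -/
def region (L : SimplicialComplex ℝ E3) (B : Set (E3 → ℝ)) : Set E3 :=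
  {x | ∃ w ∈ B, Bary L x w}

theorem joined_seg {L : SimplicialComplex ℝ E3} {B : Set (E3 → ℝ)} {s : Finset E3}
    (hs : s ∈ L.faces) {x y : E3} {w w' : E3 → ℝ} (h : OnFace s x w) (h' : OnFace s y w')
    (hB : ∀ a b : ℝ, 0 ≤ a → 0 ≤ b → a + b = 1 → (fun v => a * w v + b * w' v) ∈ B) :
    JoinedIn (region L B) x y := by
  apply JoinedIn.of_segment_subset
  rintro _ ⟨a, b, ha, hb, hab, rfl⟩
  exact ⟨_, hB a b ha hb hab, s, hs, h.seg h' a b ha hb hab⟩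

theorem joined_edge {L : SimplicialComplex ℝ E3} {B : Set (E3 → ℝ)} {u v : E3}
    (hs : ({u, v} : Finset E3) ∈ L.faces)
    (hB : ∀ w : E3 → ℝ, (∀ y, w y ≠ 0 → y = u ∨ y = v) → w ∈ B) :
    JoinedIn (region L B) u v := by
  refine joined_seg hs (onFace_vertex (v := u) (by simp)) (onFace_vertex (v := v) (by simp)) ?_
  intro a b _ _ _
  apply hB
  intro y hy
  by_contra! h
  simp [h.1, h.2] at hy

instance fact_finrank_E3 : Fact (Module.finrank ℝ E3 = 2 + 1) := ⟨by simp [E3]⟩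

/-- `K_{3,3}` does not embed in `L`. -/
theorem k33_L {L : SimplicialComplex ℝ E3}
    (hL : Nonempty (L.space ≃ₜ (Metric.sphere (0 : E3) 1 : Set E3)))
    (P Q : Fin 3 → E3) (B : Fin 3 → Fin 3 → Set (E3 → ℝ))
    (hJ : ∀ i j, JoinedIn (region L (B i j)) (P i) (Q j))
    (p : E3) (wp : E3 → ℝ) (hp : Bary L p wp) (hpB : ∀ i j, wp ∉ B i j)
    (hdisj : ∀ i j k l, i < k → j ≠ l → ∀ w : E3 → ℝ, (∃ y, w y ≠ 0) →
      w ∈ B i j → w ∈ B k l → False) : False := by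
  obtain ⟨e⟩ := hL
  let p' : L.space := ⟨p, hp.mem_space⟩
  let st := stereographic' 2 (e p')
  choose γ hγ using hJ
  have hsp : ∀ i j t, γ i j t ∈ L.space := fun i j t => by
    obtain ⟨w, _, hw⟩ := hγ i j t
    exact hw.mem_space
  have hne : ∀ i j t, (⟨γ i j t, hsp i j t⟩ : L.space) ≠ p' := fun i j t h => by
    obtain ⟨w, hw, hw'⟩ := hγ i j t
    have : γ i j t = p := congrArg Subtype.val h
    rw [this] at hw'
    rw [hw'.unique hp] at hw
    exact hpB i j hw
  have hsrc : ∀ x : L.space, x ≠ p' → e x ∈ st.source := by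
    intro x hx
    simp only [st, stereographic'_source]
    simpa using hx
  let f : L.space → ℂ := fun x => Complex.orthonormalBasisOneI.repr.symm (st (e x))
  have finj : ∀ x y, x ≠ p' → y ≠ p' → f x = f y → x = y := by
    intro x y hx hy h
    exact e.injective (st.injOn (hsrc x hx) (hsrc y hy)
      (Complex.orthonormalBasisOneI.repr.symm.injective h))
  have hext : ∀ i j, ∀ s : ℝ, (γ i j).extend s ∈ L.space ∧ ∃ t, (γ i j).extend s = γ i j t := by
    intro i j s
    have : (γ i j).extend s ∈ Set.range (γ i j).extend := ⟨s, rfl⟩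
    rw [Path.extend_range] at this
    obtain ⟨t, ht⟩ := this
    rw [← ht]; exact ⟨hsp i j t, t, rfl⟩
  let g : Fin 3 → Fin 3 → ℝ → L.space := fun i j s => ⟨(γ i j).extend s, (hext i j s).1⟩
  have hgne : ∀ i j s, g i j s ≠ p' := by
    intro i j s h
    obtain ⟨t, ht⟩ := (hext i j s).2
    apply hne i j t
    rw [← h]; exact Subtype.ext ht.symm
  have hgc : ∀ i j, Continuous (fun s => f (g i j s)) := by
    intro i j
    have h1 : Continuous (fun s => e (g i j s)) :=
      e.continuous.comp ((γ i j).continuous_extend.subtype_mk _)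
    have h2 : Continuous (fun s => st (e (g i j s))) :=
      st.continuousOn.comp_continuous h1 (fun s => hsrc _ (hgne i j s))
    exact Complex.orthonormalBasisOneI.repr.symm.continuous.comp h2
  have hP : ∀ i, P i ∈ L.space := fun i => by simpa using hsp i 0 0
  have hQ : ∀ i, Q i ∈ L.space := fun i => by simpa using hsp 0 i 1
  have hd : ∀ i j k l, i < k → j ≠ l → ∀ s t, f (g i j s) ≠ f (g k l t) := by
    intro i j k l hik hjl s t h
    have h1 := congrArg Subtype.val (finj _ _ (hgne _ _ _) (hgne _ _ _) h)
    simp only [g] at h1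
    obtain ⟨s', hs'⟩ := (hext i j s).2
    obtain ⟨t', ht'⟩ := (hext k l t).2
    rw [hs', ht'] at h1
    obtain ⟨w, hw, hw'⟩ := hγ i j s'
    obtain ⟨u, hu, hu'⟩ := hγ k l t'
    rw [← h1] at hu'
    rw [hu'.unique hw'] at hu
    exact hdisj i j k l hik hjl w hw'.exists_ne hw hu
  refine k33_plane (fun i => f ⟨P i, hP i⟩) (fun i => f ⟨Q i, hQ i⟩) (fun i j s => f (g i j s))
    hgc (fun i j => ?_) (fun i j => ?_) (fun i j k l hik hjl s t => ?_)
  · congr 1; apply Subtype.ext; simp [g]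
  · congr 1; apply Subtype.ext; simp [g]
  · rcases lt_or_gt_of_ne hik with h | h
    · exact hd i j k l h hjl s t
    · exact (hd k l i j h hjl.symm t s).symm

end CoxOrb

namespace CoxOrb

/-- The nine sets of coordinates for `no_triangle_config`. -/
def triSets {V : Type} (a b t r' t' c c' : V) : Fin 3 → Fin 3 → Set (V → ℝ) :=
  ![![{w | 0 < w a ∧ w b = w t}, {w | ∀ y, w y ≠ 0 → y = a ∨ y = c' ∨ y = r'},
        {w | ∀ y, w y ≠ 0 → y = a ∨ y = t'}],
      ![{w | 0 < w b ∧ w a = w t}, {w | ∀ y, w y ≠ 0 → y = b ∨ y = r'},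
        {w | ∀ y, w y ≠ 0 → y = b ∨ y = t'}],
      ![{w | 0 < w t ∧ w a = w b}, {w | ∀ y, w y ≠ 0 → y = t ∨ y = r'},
        {w | ∀ y, w y ≠ 0 → y = t ∨ y = c ∨ y = t'}]]

/-- The nine sets of coordinates for `no_skeleton_config`. -/
def skelSets {V : Type} (t b c a r' t' d : V) : Fin 3 → Fin 3 → Set (V → ℝ) :=
  ![![{w | ∀ y, w y ≠ 0 → y = t ∨ y = a}, {w | ∀ y, w y ≠ 0 → y = t ∨ y = r'},
        {w | ∀ y, w y ≠ 0 → y = t ∨ y = d ∨ y = t'}],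
      ![{w | ∀ y, w y ≠ 0 → y = b ∨ y = a}, {w | ∀ y, w y ≠ 0 → y = b ∨ y = r'},
        {w | ∀ y, w y ≠ 0 → y = b ∨ y = t'}],
      ![{w | ∀ y, w y ≠ 0 → y = c ∨ y = a}, {w | ∀ y, w y ≠ 0 → y = c ∨ y = r'},
        {w | ∀ y, w y ≠ 0 → y = c ∨ y = t'}]]

theorem supp_disj {V : Type} {w : V → ℝ} {p q : V → Prop} (hy : ∃ y, w y ≠ 0)
    (h : ∀ y, w y ≠ 0 → p y) (h' : ∀ y, w y ≠ 0 → q y) (hpq : ∀ y, p y → q y → False) :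
    False := by
  obtain ⟨y, hy⟩ := hy
  exact hpq y (h y hy) (h' y hy)

theorem pos_disj {V : Type} {w : V → ℝ} {q : V → Prop} {x : V} {r : Prop}
    (h : 0 < w x ∧ r) (h' : ∀ y, w y ≠ 0 → q y) (hpq : ¬ q x) : False :=
  hpq (h' x h.1.ne')

set_option maxHeartbeats 1000000 in
theorem triSets_disj {V : Type} (a b t r' t' c c' : V)
    (hd : [a, b, t, r', t', c, c'].Nodup) (i j k l : Fin 3) (hik : i < k) (hjl : j ≠ l)
    (w : V → ℝ) (hy : ∃ y, w y ≠ 0) (h : w ∈ triSets a b t r' t' c c' i j)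
    (h' : w ∈ triSets a b t r' t' c c' k l) : False := by
  simp only [List.nodup_cons, List.mem_cons, List.not_mem_nil, or_false, not_or] at hd
  fin_cases i <;> fin_cases k <;> first | exact absurd hik (by decide) | skip
  all_goals
    fin_cases j <;> fin_cases l <;> first | exact absurd rfl hjl | skip
  all_goals
    clear hik hjl
    first
    | exact pos_disj h h' (by clear h h' hy; grind)
    | exact pos_disj h' h (by clear h h' hy; grind)
    | exact supp_disj hy h h' (by clear h h' hy; grind)

set_option maxHeartbeats 1000000 in
theorem skelSets_disj {V : Type} (a b t r' t' c c' : V)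
    (hd : [a, b, t, r', t', c, c'].Nodup) (i j k l : Fin 3) (hik : i < k) (hjl : j ≠ l)
    (w : V → ℝ) (hy : ∃ y, w y ≠ 0) (h : w ∈ skelSets a b t r' t' c c' i j)
    (h' : w ∈ skelSets a b t r' t' c c' k l) : False := by
  simp only [List.nodup_cons, List.mem_cons, List.not_mem_nil, or_false, not_or] at hd
  fin_cases i <;> fin_cases k <;> first | exact absurd hik (by decide) | skip
  all_goals
    fin_cases j <;> fin_cases l <;> first | exact absurd rfl hjl | skip
  all_goals
    clear hik hjl
    exact supp_disj hy h h' (by clear h h' hy; grind)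

theorem book_disj {V : Type} (a b t t' : V) (hab : a ≠ b) (hta : t ≠ a) (htb : t ≠ b)
    (hta' : t' ≠ a) (htb' : t' ≠ b) (htt : t ≠ t') (i k : Fin 3) (hik : i < k)
    (w : V → ℝ) (hy : ∃ y, w y ≠ 0)
    (h : w ∈ (![{w | ∀ y, w y ≠ 0 → y = a ∨ y = t}, {w | ∀ y, w y ≠ 0 → y = b ∨ y = t},
      {w | w a = w b ∧ ∀ y, w y ≠ 0 → y = a ∨ y = b ∨ y = t}] : Fin 3 → Set (V → ℝ)) i)
    (h' : w ∈ (![{w | ∀ y, w y ≠ 0 → y = a ∨ y = t'}, {w | ∀ y, w y ≠ 0 → y = b ∨ y = t'},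
      {w | w a = w b ∧ ∀ y, w y ≠ 0 → y = a ∨ y = b ∨ y = t'}] : Fin 3 → Set (V → ℝ)) k) :
    False := by
  obtain ⟨y, hy⟩ := hy
  fin_cases i <;> fin_cases k <;> simp at hik <;> simp at h h' <;> grind

/-- An edge lies in at most two triangles. -/
theorem no_book {L : SimplicialComplex ℝ E3}
    (hL : Nonempty (L.space ≃ₜ (Metric.sphere (0 : E3) 1 : Set E3)))
    (a b : E3) (T : Fin 3 → E3) (hab : a ≠ b) (hT : Function.Injective T)
    (hTa : ∀ j, T j ≠ a) (hTb : ∀ j, T j ≠ b)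
    (hf : ∀ j, ({a, b, T j} : Finset E3) ∈ L.faces) : False := by
  have hmid : ∀ s : Finset E3, a ∈ s → b ∈ s → ∀ c : ℝ, 0 ≤ c → c ≤ 1 →
      OnFace s (c • a + (1 - c) • b) (fun y => c * (if y = a then 1 else 0) +
        (1 - c) * (if y = b then 1 else 0)) := fun s ha hb c hc hc' =>
    (onFace_vertex ha).seg (onFace_vertex hb) _ _ hc (by linarith) (by ring)
  have e1 : ∀ j, ({a, T j} : Finset E3) ∈ L.faces := fun j =>
    L.down_closed (hf j) (by intro x; simp; tauto) (by simp)
  have e2 : ∀ j, ({b, T j} : Finset E3) ∈ L.faces := fun j =>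
    L.down_closed (hf j) (by intro x; simp; tauto) (by simp)
  refine k33_L hL ![a, b, (1 / 2 : ℝ) • a + (1 - 1 / 2 : ℝ) • b] T
    (fun i j => ![{w | ∀ y, w y ≠ 0 → y = a ∨ y = T j}, {w | ∀ y, w y ≠ 0 → y = b ∨ y = T j},
      {w | w a = w b ∧ ∀ y, w y ≠ 0 → y = a ∨ y = b ∨ y = T j}] i) ?_
    _ _ ⟨{a, b, T 0}, hf 0, hmid _ (by simp) (by simp) (3 / 4) (by norm_num) (by norm_num)⟩ ?_ ?_
  · intro i j
    fin_cases i
    · exact joined_edge (e1 j) (fun w hw => hw)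
    · exact joined_edge (e2 j) (fun w hw => hw)
    · refine joined_seg (hf j) (hmid _ (by simp) (by simp) (1 / 2) (by norm_num) (by norm_num))
        (onFace_vertex (v := T j) (by simp)) ?_
      intro c d _ _ _
      refine ⟨?_, fun y hy => ?_⟩
      · simp [hab, hab.symm, (hTa j).symm, (hTb j).symm]; norm_num
      · by_contra! h
        simp [h.1, h.2.1, h.2.2] at hy
  · intro i j
    have := hTa j
    have := hTb j
    fin_cases i
    · intro h
      rcases h b (by simp [hab.symm]; norm_num) with h | h
      · exact hab h.symm
      · exact hTb j h.symm
    · intro h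
      rcases h a (by simp [hab]) with h | h
      · exact hab h
      · exact hTa j h.symm
    · rintro ⟨h, -⟩
      simp [hab, hab.symm] at h
      norm_num at h
  · intro i j k l hik hjl w hy h h'
    exact book_disj a b (T j) (T l) hab (hTa j) (hTb j) (hTa l) (hTb l)
      (fun h => hjl (hT h)) i k hik w hy h h'

theorem onFace_tri {a b t : E3} (hab : a ≠ b) (hat : a ≠ t) (hbt : b ≠ t) (x y z : ℝ)
    (hx : 0 ≤ x) (hy : 0 ≤ y) (hz : 0 ≤ z) (h : x + y + z = 1) :
    OnFace {a, b, t} (x • a + (y • b + z • t))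
      (fun v => if v = a then x else if v = b then y else if v = t then z else 0) := by
  refine ⟨fun v => ?_, fun v hv => ?_, ?_, ?_⟩
  · split_ifs <;> first | assumption | exact le_rfl
  · by_contra h; simp at h; simp [h] at hv
  · rw [Finset.sum_insert (by simp [hab, hat]), Finset.sum_insert (by simp [hbt])]
    simp [hab.symm, hat.symm, hbt.symm]; linarith
  · rw [Finset.sum_insert (by simp [hab, hat]), Finset.sum_insert (by simp [hbt])]
    simp [hab.symm, hat.symm, hbt.symm]

theorem tri_supp {V : Type} [DecidableEq V] {a b t : V} (hab : a ≠ b) (hat : a ≠ t) (hbt : b ≠ t)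
    {p : V → Prop}
    (h : ∀ y, (if y = a then (1 / 2 : ℝ) else if y = b then 1 / 3 else
      if y = t then 1 / 6 else 0) ≠ 0 → p y) : p a ∧ p b ∧ p t := by
  refine ⟨h a (by simp), h b (by simp [hab.symm]), h t (by simp [hat.symm, hbt.symm])⟩

set_option maxHeartbeats 1000000 in
theorem triSets_p {V : Type} [DecidableEq V] (a b t r' t' c c' : V)
    (hd : [a, b, t, r', t', c, c'].Nodup) (i j : Fin 3) :
    (fun v => if v = a then (1 / 2 : ℝ) else if v = b then 1 / 3 else
      if v = t then 1 / 6 else 0) ∉ triSets a b t r' t' c c' i j := by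
  simp only [List.nodup_cons, List.mem_cons, List.not_mem_nil, or_false, not_or] at hd
  intro h
  have hab : a ≠ b := by grind
  have hat : a ≠ t := by grind
  have hbt : b ≠ t := by grind
  fin_cases i <;> fin_cases j
  all_goals first
    | exact absurd (tri_supp hab hat hbt h) (by clear h; grind)
    | (have h2 := h.2; simp [hab.symm, hat.symm, hbt.symm] at h2)

set_option maxHeartbeats 1000000 in
theorem skelSets_p {V : Type} [DecidableEq V] (t b c a r' t' d : V)
    (hd : [t, b, c, a, r', t', d].Nodup) (i j : Fin 3) :
    (fun v => if v = a then (1 / 2 : ℝ) else if v = b then 1 / 3 else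
      if v = t then 1 / 6 else 0) ∉ skelSets t b c a r' t' d i j := by
  simp only [List.nodup_cons, List.mem_cons, List.not_mem_nil, or_false, not_or] at hd
  intro h
  have hab : a ≠ b := by grind
  have hat : a ≠ t := by grind
  have hbt : b ≠ t := by grind
  fin_cases i <;> fin_cases j
  all_goals exact absurd (tri_supp hab hat hbt h) (by clear h; grind)

/-- Two disjoint connected sets cannot both be adjacent to the three vertices of a triangle,
in the form needed. -/
theorem no_triangle_config {L : SimplicialComplex ℝ E3}
    (hL : Nonempty (L.space ≃ₜ (Metric.sphere (0 : E3) 1 : Set E3)))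
    (a b t r' t' c c' : E3) (hd : [a, b, t, r', t', c, c'].Nodup)
    (hf : ({a, b, t} : Finset E3) ∈ L.faces)
    (h1 : ({a, c'} : Finset E3) ∈ L.faces) (h2 : ({c', r'} : Finset E3) ∈ L.faces)
    (h3 : ({a, t'} : Finset E3) ∈ L.faces) (h4 : ({b, r'} : Finset E3) ∈ L.faces)
    (h5 : ({b, t'} : Finset E3) ∈ L.faces) (h6 : ({t, r'} : Finset E3) ∈ L.faces)
    (h7 : ({t, c} : Finset E3) ∈ L.faces) (h8 : ({c, t'} : Finset E3) ∈ L.faces) : False := by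
  have hab : a ≠ b := by rintro rfl; simp at hd
  have hat : a ≠ t := by rintro rfl; simp at hd
  have hbt : b ≠ t := by rintro rfl; simp at hd
  have hz := onFace_tri hab hat hbt (1 / 3) (1 / 3) (1 / 3) (by norm_num) (by norm_num)
    (by norm_num) (by norm_num)
  have hp := onFace_tri hab hat hbt (1 / 2) (1 / 3) (1 / 6) (by norm_num) (by norm_num)
    (by norm_num) (by norm_num)
  refine k33_L hL ![a, b, t] ![((1/3:ℝ) • a + ((1/3:ℝ) • b + (1/3:ℝ) • t)), r', t'] (triSets a b t r' t' c c') ?_ _ _ ⟨_, hf, hp⟩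
    (triSets_p a b t r' t' c c' hd) (triSets_disj a b t r' t' c c' hd)
  intro i j
  fin_cases i <;> fin_cases j
  · refine joined_seg hf (onFace_vertex (v := a) (by simp)) hz fun x y hx hy hxy => ⟨?_, ?_⟩
    · simp; linarith
    · simp [hab.symm, hat.symm, hbt.symm]
  · exact JoinedIn.trans (joined_edge (B := triSets a b t r' t' c c' 0 1) h1
        (fun w hw y hy => (hw y hy).imp_right Or.inl))
      (joined_edge (B := triSets a b t r' t' c c' 0 1) h2 (fun w hw y hy => Or.inr (hw y hy)))
  · exact joined_edge h3 (fun w hw => hw)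
  · refine joined_seg hf (onFace_vertex (v := b) (by simp)) hz fun x y hx hy hxy => ⟨?_, ?_⟩
    · simp [hab.symm]; linarith
    · simp [hab, hat.symm, hbt.symm, hat]
  · exact joined_edge h4 (fun w hw => hw)
  · exact joined_edge h5 (fun w hw => hw)
  · refine joined_seg hf (onFace_vertex (v := t) (by simp)) hz fun x y hx hy hxy => ⟨?_, ?_⟩
    · simp [hat.symm, hbt.symm]; linarith
    · simp [hab.symm, hat, hbt]
  · exact joined_edge h6 (fun w hw => hw)
  · exact JoinedIn.trans (joined_edge (B := triSets a b t r' t' c c' 2 2) h7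
        (fun w hw y hy => (hw y hy).imp_right Or.inl))
      (joined_edge (B := triSets a b t r' t' c c' 2 2) h8 (fun w hw y hy => Or.inr (hw y hy)))

/-- A `K_{3,3}` in the 1-skeleton with one subdivided edge. -/
theorem no_skeleton_config {L : SimplicialComplex ℝ E3}
    (hL : Nonempty (L.space ≃ₜ (Metric.sphere (0 : E3) 1 : Set E3)))
    (t b c a r' t' d : E3) (hd : [t, b, c, a, r', t', d].Nodup)
    (hf : ({a, b, t} : Finset E3) ∈ L.faces)
    (h1 : ({t, a} : Finset E3) ∈ L.faces) (h2 : ({t, r'} : Finset E3) ∈ L.faces)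
    (h3 : ({t, d} : Finset E3) ∈ L.faces) (h3' : ({d, t'} : Finset E3) ∈ L.faces)
    (h4 : ({b, a} : Finset E3) ∈ L.faces) (h5 : ({b, r'} : Finset E3) ∈ L.faces)
    (h6 : ({b, t'} : Finset E3) ∈ L.faces) (h7 : ({c, a} : Finset E3) ∈ L.faces)
    (h8 : ({c, r'} : Finset E3) ∈ L.faces) (h9 : ({c, t'} : Finset E3) ∈ L.faces) : False := by
  have hab : a ≠ b := by rintro rfl; simp at hd
  have hat : a ≠ t := by rintro rfl; simp at hd
  have hbt : b ≠ t := by rintro rfl; simp at hd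
  have hp := onFace_tri hab hat hbt (1 / 2) (1 / 3) (1 / 6) (by norm_num) (by norm_num)
    (by norm_num) (by norm_num)
  refine k33_L hL ![t, b, c] ![a, r', t'] (skelSets t b c a r' t' d) ?_ _ _ ⟨_, hf, hp⟩
    (skelSets_p t b c a r' t' d hd) (skelSets_disj t b c a r' t' d hd)
  intro i j
  fin_cases i <;> fin_cases j
  · exact joined_edge h1 (fun w hw => hw)
  · exact joined_edge h2 (fun w hw => hw)
  · exact JoinedIn.trans (joined_edge (B := skelSets t b c a r' t' d 0 2) h3
        (fun w hw y hy => (hw y hy).imp_right Or.inl))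
      (joined_edge (B := skelSets t b c a r' t' d 0 2) h3' (fun w hw y hy => Or.inr (hw y hy)))
  · exact joined_edge h4 (fun w hw => hw)
  · exact joined_edge h5 (fun w hw => hw)
  · exact joined_edge h6 (fun w hw => hw)
  · exact joined_edge h7 (fun w hw => hw)
  · exact joined_edge h8 (fun w hw => hw)
  · exact joined_edge h9 (fun w hw => hw)

end CoxOrb


namespace CoxOrb

/-- `v` is joined to `u` by an edge labeled two. -/
def Nb (L : SimplicialComplex ℝ E3) (m : E3 → E3 → ℕ) (u v : E3) : Prop :=
  u ≠ v ∧ ({u, v} : Finset E3) ∈ L.faces ∧ m u v = 2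

/-- The largest possible base for a suspension with suspension points `u`, `v`. -/
def baseZ (L : SimplicialComplex ℝ E3) (m : E3 → E3 → ℕ) (u v : E3) : Set (Finset E3) :=
  {F | F ∈ L.faces ∧ (∀ x ∈ F, Nb L m u x ∧ Nb L m v x) ∧ insert u F ∈ L.faces ∧
    insert v F ∈ L.faces}

/-- The largest possible suspension with suspension points `u`, `v`. -/
def susp (L : SimplicialComplex ℝ E3) (m : E3 → E3 → ℕ) (u v : E3) : Set (Finset E3) :=
  joinSusp (baseZ L m u v) u v

variable {L : SimplicialComplex ℝ E3} {m : E3 → E3 → ℕ}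

theorem Nb.symm (hL : IsLabeledS2 L m) {u v : E3} (h : Nb L m u v) : Nb L m v u :=
  ⟨h.1.symm, by rw [Finset.pair_comm]; exact h.2.1, by rw [hL.symm]; exact h.2.2⟩

theorem Nb.edge' {u v : E3} (h : Nb L m u v) : ({v, u} : Finset E3) ∈ L.faces := by
  rw [Finset.pair_comm]; exact h.2.1

theorem sub_face {F G : Finset E3} (hF : F ∈ L.faces) (h : G ⊆ F) (hG : G.Nonempty) :
    G ∈ L.faces := L.down_closed hF h hG

theorem edge_of_mem {F : Finset E3} (hF : F ∈ L.faces) {x y : E3} (hx : x ∈ F) (hy : y ∈ F) :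
    ({x, y} : Finset E3) ∈ L.faces :=
  sub_face hF (by intro z; simp; rintro (rfl | rfl) <;> assumption) (by simp)

theorem tri (hL : IsLabeledS2 L m) (hflag : MetricFlag L m) {u x y : E3}
    (hx : Nb L m u x) (hy : Nb L m u y) (hxy : x ≠ y) (h : ({x, y} : Finset E3) ∈ L.faces) :
    ({u, x, y} : Finset E3) ∈ L.faces := by
  rw [hflag u x y hx.1 hxy hy.1 hx.2.1 h hy.2.1]
  have h2 := hL.two_le x y hxy h
  rw [hx.2.2, hL.symm y u, hy.2.2]
  have : (0 : ℝ) < 1 / (m x y : ℝ) := by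
    have : (0 : ℝ) < m x y := by exact_mod_cast (by omega : 0 < m x y)
    positivity
  push_cast
  linarith

theorem baseZ_symm (u v : E3) : baseZ L m u v = baseZ L m v u := by
  ext F; simp only [baseZ, Set.mem_setOf_eq]
  constructor <;> rintro ⟨h, h', h1, h2⟩ <;> exact ⟨h, fun x hx => (h' x hx).symm, h2, h1⟩

theorem mem_joinSusp {Z : Set (Finset E3)} {t t' : E3} {F : Finset E3} :
    F ∈ joinSusp Z t t' ↔ F ∈ Z ∨ F = {t} ∨ F = {t'} ∨ (∃ G ∈ Z, insert t G = F) ∨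
      (∃ G ∈ Z, insert t' G = F) := by
  simp only [joinSusp, Set.mem_union, Set.mem_insert_iff, Set.mem_singleton_iff, Set.mem_image,
    or_assoc]

theorem susp_symm (u v : E3) : susp L m u v = susp L m v u := by
  ext F; rw [susp, susp, mem_joinSusp, mem_joinSusp, baseZ_symm u v]
  constructor <;> (intro h; rcases h with h | h | h | h | h <;> simp only [h, true_or, or_true])

theorem susp_faces {u v x : E3} (hx : Nb L m u x) (hx' : Nb L m v x) :
    susp L m u v ⊆ L.faces := by
  intro F hF
  rw [susp, mem_joinSusp] at hF
  obtain h | h | h | ⟨G, hG, rfl⟩ | ⟨G, hG, rfl⟩ := hF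
  · exact h.1
  · subst h; exact sub_face hx.2.1 (by simp) (by simp)
  · subst h; exact sub_face hx'.2.1 (by simp) (by simp)
  · exact hG.2.2.1
  · exact hG.2.2.2

theorem baseZ_single {u v x : E3} (hx : Nb L m u x) (hx' : Nb L m v x) :
    ({x} : Finset E3) ∈ baseZ L m u v :=
  ⟨sub_face hx.2.1 (by simp) (by simp), by simp [hx, hx'], hx.2.1, hx'.2.1⟩

theorem susp_data {u v x : E3} (huv : u ≠ v) (hx : Nb L m u x) (hx' : Nb L m v x) :
    IsRASuspData L m (susp L m u v) (baseZ L m u v) u v where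
  subset := susp_faces hx hx'
  zsubset := fun F h => h.1
  zdown := fun F hF G hGF hG => ⟨sub_face hF.1 hGF hG, fun x hx => hF.2.1 x (hGF hx),
    sub_face hF.2.2.1 (Finset.insert_subset_insert _ hGF) (by simp),
    sub_face hF.2.2.2 (Finset.insert_subset_insert _ hGF) (by simp)⟩
  znonempty := ⟨_, baseZ_single hx hx'⟩
  tne := huv
  t_notin := fun F hF h => (hF.2.1 u h).1.1 rfl
  t'_notin := fun F hF h => (hF.2.1 v h).2.1 rfl
  labels := fun w hw => ⟨(hw.2.1 w (by simp)).1.2.2, (hw.2.1 w (by simp)).2.2.2⟩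
  eq := rfl

theorem data_sub {T Z : Set (Finset E3)} {t t' : E3} (h : IsRASuspData L m T Z t t') :
    Z ⊆ baseZ L m t t' := by
  have key : ∀ F ∈ Z, insert t F ∈ L.faces ∧ insert t' F ∈ L.faces := fun F hF =>
    ⟨h.subset (by rw [h.eq, mem_joinSusp]; exact Or.inr (Or.inr (Or.inr (Or.inl ⟨F, hF, rfl⟩)))),
     h.subset (by rw [h.eq, mem_joinSusp]; exact Or.inr (Or.inr (Or.inr (Or.inr ⟨F, hF, rfl⟩))))⟩
  intro F hF
  refine ⟨h.zsubset hF, fun x hx => ?_, (key F hF).1, (key F hF).2⟩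
  have hxZ : ({x} : Finset E3) ∈ Z := h.zdown F hF _ (by simpa using hx) (by simp)
  refine ⟨⟨?_, (key _ hxZ).1, (h.labels x hxZ).1⟩, ⟨?_, (key _ hxZ).2, (h.labels x hxZ).2⟩⟩
  · rintro rfl; exact h.t_notin F hF hx
  · rintro rfl; exact h.t'_notin F hF hx

/-- The data of an infinite maximal suspension. -/
structure Cfg (L : SimplicialComplex ℝ E3) (m : E3 → E3 → ℕ) (S : Set (Finset E3)) (t t' : E3) :
    Prop where
  ne : t ≠ t'
  eq : S = susp L m t t'
  inf : InfiniteBase (baseZ L m t t')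
  max : ∀ T', IsRASusp L m T' → S ⊆ T' → S = T'

theorem Cfg.symm {S : Set (Finset E3)} {t t' : E3} (h : Cfg L m S t t') : Cfg L m S t' t :=
  ⟨h.ne.symm, by rw [susp_symm]; exact h.eq, by rw [baseZ_symm]; exact h.inf, h.max⟩

theorem exists_cfg {S : Set (Finset E3)} (h : IsInfMaxRASusp L m S) : ∃ t t', Cfg L m S t t' := by
  obtain ⟨⟨Z, t, t', hd, hi, -⟩, hmax⟩ := h
  have hZ := data_sub hd
  obtain ⟨F, hF⟩ := hd.znonempty
  obtain ⟨x, hx⟩ := L.nonempty_of_mem_faces (hd.zsubset hF)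
  have hN := (hZ hF).2.1 x hx
  have hdat := susp_data hd.tne hN.1 hN.2
  have hS : S = susp L m t t' := by
    refine hmax _ ⟨_, _, _, hdat⟩ ?_
    intro G hG
    rw [hd.eq, mem_joinSusp] at hG
    rw [susp, mem_joinSusp]
    obtain h | h | h | ⟨H, hH, h⟩ | ⟨H, hH, h⟩ := hG
    · exact Or.inl (hZ h)
    · exact Or.inr (Or.inl h)
    · exact Or.inr (Or.inr (Or.inl h))
    · exact Or.inr (Or.inr (Or.inr (Or.inl ⟨H, hZ hH, h⟩)))
    · exact Or.inr (Or.inr (Or.inr (Or.inr ⟨H, hZ hH, h⟩)))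
  have hZe : Z = baseZ L m t t' := by
    refine hZ.antisymm fun G hG => ?_
    have h1 := hdat.t_notin G hG
    have h2 := hdat.t'_notin G hG
    have : G ∈ S := by rw [hS, susp, mem_joinSusp]; exact Or.inl hG
    rw [hd.eq, mem_joinSusp] at this
    obtain h | h | h | ⟨H, hH, h⟩ | ⟨H, hH, h⟩ := this
    · exact h
    · subst h; simp at h1
    · subst h; simp at h2
    · subst h; simp at h1
    · subst h; simp at h2
  exact ⟨t, t', hd.tne, hS, hZe ▸ hi, hmax⟩

theorem book (hL : IsLabeledS2 L m) {x y p q r : E3} (hxy : x ≠ y) (hpq : p ≠ q) (hpr : p ≠ r)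
    (hqr : q ≠ r) (hpx : p ≠ x) (hpy : p ≠ y) (hqx : q ≠ x) (hqy : q ≠ y) (hrx : r ≠ x)
    (hry : r ≠ y) (hp : ({x, y, p} : Finset E3) ∈ L.faces) (hq : ({x, y, q} : Finset E3) ∈ L.faces)
    (hr : ({x, y, r} : Finset E3) ∈ L.faces) : False := by
  refine no_book hL.sphere x y ![p, q, r] hxy ?_ ?_ ?_ ?_
  · intro i j; fin_cases i <;> fin_cases j <;> simp [hpq, hpr, hqr, hpq.symm, hpr.symm, hqr.symm]
  all_goals intro i; fin_cases i <;> assumption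

theorem third_vertex {t t' a b : E3} (hi : InfiniteBase (baseZ L m t t'))
    (hd : ∀ F ∈ baseZ L m t t', ∀ G : Finset E3, G ⊆ F → G.Nonempty → G ∈ baseZ L m t t')
    (hab : a ≠ b) (h : ({a, b} : Finset E3) ∈ baseZ L m t t') :
    ∃ c, c ≠ a ∧ c ≠ b ∧ Nb L m t c ∧ Nb L m t' c := by
  by_contra hcon
  push Not at hcon
  refine hi.2 ⟨a, b, hab, ?_⟩
  ext F
  simp only [Set.mem_insert_iff, Set.mem_singleton_iff]
  constructor
  · intro hF
    have hsub : F ⊆ {a, b} := by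
      intro x hx
      have := hcon x
      have hN := hF.2.1 x hx
      simp only [Finset.mem_insert, Finset.mem_singleton]
      tauto
    have hne := L.nonempty_of_mem_faces hF.1
    rw [← Finset.mem_powerset] at hsub
    by_cases ha : a ∈ F <;> by_cases hb : b ∈ F
    · right; right
      exact (Finset.mem_powerset.1 hsub).antisymm (by intro z; simp; rintro (rfl | rfl) <;> assumption)
    · left
      ext z
      have : z ∈ F → z ∈ ({a, b} : Finset E3) := fun hz => Finset.mem_powerset.1 hsub hz
      simp only [Finset.mem_insert, Finset.mem_singleton] at this ⊢
      constructor
      · intro hz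
        rcases this hz with h0 | h0
        · exact h0
        · exact absurd (h0 ▸ hz) hb
      · intro h0; rw [h0]; assumption
    · right; left
      ext z
      have : z ∈ F → z ∈ ({a, b} : Finset E3) := fun hz => Finset.mem_powerset.1 hsub hz
      simp only [Finset.mem_insert, Finset.mem_singleton] at this ⊢
      constructor
      · intro hz
        rcases this hz with h0 | h0
        · exact absurd (h0 ▸ hz) ha
        · exact h0
      · intro h0; rw [h0]; assumption
    · exfalso
      obtain ⟨z, hz⟩ := hne
      have := Finset.mem_powerset.1 hsub hz
      simp only [Finset.mem_insert, Finset.mem_singleton] at this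
      rcases this with h0 | h0
      · exact ha (h0 ▸ hz)
      · exact hb (h0 ▸ hz)
  · rintro (rfl | rfl | rfl)
    · exact hd _ h _ (by simp) (by simp)
    · exact hd _ h _ (by simp) (by simp)
    · exact h

theorem susp_mem {t t' : E3} {F : Finset E3} (hF : F ∈ susp L m t t') {x : E3} (hx : x ∈ F) :
    x = t ∨ x = t' ∨ (Nb L m t x ∧ Nb L m t' x) := by
  rw [susp, mem_joinSusp] at hF
  obtain h | h | h | ⟨G, hG, rfl⟩ | ⟨G, hG, rfl⟩ := hF
  · exact Or.inr (Or.inr (h.2.1 x hx))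
  · subst h; simp at hx; exact Or.inl hx
  · subst h; simp at hx; exact Or.inr (Or.inl hx)
  · rcases Finset.mem_insert.1 hx with h | h
    · exact Or.inl h
    · exact Or.inr (Or.inr (hG.2.1 x h))
  · rcases Finset.mem_insert.1 hx with h | h
    · exact Or.inr (Or.inl h)
    · exact Or.inr (Or.inr (hG.2.1 x h))

theorem sub_susp (hL : IsLabeledS2 L m) (hflag : MetricFlag L m) {u v : E3} (huv : u ≠ v)
    (hE : ({u, v} : Finset E3) ∉ L.faces) {F : Finset E3} (hF : F ∈ L.faces)
    (hV : ∀ x ∈ F, x = u ∨ x = v ∨ (Nb L m u x ∧ Nb L m v x))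
    (h3 : ∀ x ∈ F, ∀ y ∈ F, ∀ z ∈ F, x ≠ y → x ≠ z → y ≠ z → x ≠ u → y ≠ u → z ≠ u →
      x ≠ v → y ≠ v → z ≠ v → False) : F ∈ susp L m u v := by
  have hnot : u ∈ F → v ∈ F → False := fun h h' => hE (edge_of_mem hF h h')
  have hm : ∀ G : Finset E3, G.Nonempty → G ⊆ F → u ∉ G → v ∉ G → G ∈ baseZ L m u v := by
    intro G hG hGF hu hv
    have hGL := sub_face hF hGF hG
    have hN : ∀ x ∈ G, Nb L m u x ∧ Nb L m v x := by
      intro x hx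
      rcases hV x (hGF hx) with h | h | h
      · subst h; exact absurd hx hu
      · subst h; exact absurd hx hv
      · exact h
    have hc : G.card ≤ 2 := by
      by_contra hc
      push Not at hc
      obtain ⟨x, hx, y, hy, z, hz, hxy, hxz, hyz⟩ := Finset.two_lt_card.1 hc
      exact h3 x (hGF hx) y (hGF hy) z (hGF hz) hxy hxz hyz (hN x hx).1.1.symm (hN y hy).1.1.symm
        (hN z hz).1.1.symm (hN x hx).2.1.symm (hN y hy).2.1.symm (hN z hz).2.1.symm
    have hpos := hG.card_pos
    obtain h1 | h2 : G.card = 1 ∨ G.card = 2 := by omega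
    · obtain ⟨x, rfl⟩ := Finset.card_eq_one.1 h1
      have := hN x (by simp)
      exact baseZ_single this.1 this.2
    · obtain ⟨x, y, hxy, rfl⟩ := Finset.card_eq_two.1 h2
      have hx := hN x (by simp)
      have hy := hN y (by simp)
      exact ⟨hGL, hN, tri hL hflag hx.1 hy.1 hxy hGL, tri hL hflag hx.2 hy.2 hxy hGL⟩
  rw [susp, mem_joinSusp]
  by_cases hu : u ∈ F
  · have hv : v ∉ F := fun h => hnot hu h
    by_cases he : (F.erase u).Nonempty
    · exact Or.inr (Or.inr (Or.inr (Or.inl ⟨F.erase u, hm _ he (Finset.erase_subset _ _) (by simp)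
        (by simp [hv]), Finset.insert_erase hu⟩)))
    · right; left
      rw [← Finset.insert_erase hu, Finset.not_nonempty_iff_eq_empty.1 he]; rfl
  · by_cases hv : v ∈ F
    · by_cases he : (F.erase v).Nonempty
      · exact Or.inr (Or.inr (Or.inr (Or.inr ⟨F.erase v, hm _ he (Finset.erase_subset _ _)
          (by simp [hu]) (by simp), Finset.insert_erase hv⟩)))
      · right; right; left
        rw [← Finset.insert_erase hv, Finset.not_nonempty_iff_eq_empty.1 he]; rfl
    · exact Or.inl (hm F (L.nonempty_of_mem_faces hF) subset_rfl hu hv)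

/-- A 2-simplex of a suspension contains exactly one suspension point. -/
theorem face_form (hL : IsLabeledS2 L m) {S : Set (Finset E3)} {t t' : E3} (h : Cfg L m S t t')
    {F : Finset E3} (hF : F ∈ S) (hc : F.card = 3) :
    ∃ u u' a b, Cfg L m S u u' ∧ a ≠ b ∧ ({a, b} : Finset E3) ∈ baseZ L m u u' ∧
      F = {u, a, b} := by
  rw [h.eq, susp, mem_joinSusp] at hF
  obtain h1 | rfl | rfl | ⟨G, hG, rfl⟩ | ⟨G, hG, rfl⟩ := hF
  · exfalso
    obtain ⟨a, b, c, hab, hac, hbc, rfl⟩ := Finset.card_eq_three.1 hc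
    have ha := h1.2.1 a (by simp)
    have hb := h1.2.1 b (by simp)
    have hc' := h1.2.1 c (by simp)
    refine book hL hab (p := t) (q := t') (r := c) h.ne hc'.1.1 hc'.2.1 ha.1.1 hb.1.1 ha.2.1
      hb.2.1 hac.symm hbc.symm ?_ ?_ h1.1
    · exact sub_face h1.2.2.1 (by intro z; simp; tauto) (by simp)
    · exact sub_face h1.2.2.2 (by intro z; simp; tauto) (by simp)
  · simp at hc
  · simp at hc
  · have : t ∉ G := fun h => (hG.2.1 t h).1.1 rfl
    rw [Finset.card_insert_of_notMem this] at hc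
    obtain ⟨a, b, hab, rfl⟩ := Finset.card_eq_two.1 (by omega : G.card = 2)
    exact ⟨t, t', a, b, h, hab, hG, rfl⟩
  · have : t' ∉ G := fun h => (hG.2.1 t' h).2.1 rfl
    rw [Finset.card_insert_of_notMem this] at hc
    obtain ⟨a, b, hab, rfl⟩ := Finset.card_eq_two.1 (by omega : G.card = 2)
    exact ⟨t', t, a, b, h.symm, hab, by rw [baseZ_symm]; exact hG, rfl⟩

end CoxOrb


namespace CoxOrb

variable {L : SimplicialComplex ℝ E3} {m : E3 → E3 → ℕ}

theorem Cfg.data {S : Set (Finset E3)} {t t' x : E3} (h : Cfg L m S t t') (hx : Nb L m t x)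
    (hx' : Nb L m t' x) : IsRASuspData L m S (baseZ L m t t') t t' := by
  rw [h.eq]; exact susp_data h.ne hx hx'

/-- If the cyclic base of `S` has only the vertices `a`, `b`, `r'`, then `S ⊆ S'`. -/
theorem case_small (hL : IsLabeledS2 L m) (hflag : MetricFlag L m) {S S' : Set (Finset E3)}
    {t t' a b r' : E3} (h : Cfg L m S t t') (h' : Cfg L m S' a r')
    (hta : Nb L m t a) (htb : Nb L m t b) (ht'a : Nb L m t' a) (ht'b : Nb L m t' b)
    (hab : Nb L m a b) (hr't : Nb L m r' t) (hr'b : Nb L m r' b) (hrt2 : Nb L m r' t')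
    (hntt : ({t, t'} : Finset E3) ∉ L.faces) (hnar : ({a, r'} : Finset E3) ∉ L.faces)
    (hV : ∀ c, Nb L m t c → Nb L m t' c → c = a ∨ c = b ∨ c = r') : S = S' := by
  refine h.max _ ⟨_, _, _, h'.data hab hr'b⟩ fun F hF => ?_
  have hFL : F ∈ L.faces := (h.data hta ht'a).subset hF
  rw [h.eq] at hF
  have hpool : ∀ x ∈ F, x = t ∨ x = t' ∨ x = a ∨ x = b ∨ x = r' := by
    intro x hx
    rcases susp_mem hF hx with h | h | h
    · exact Or.inl h
    · exact Or.inr (Or.inl h)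
    · exact Or.inr (Or.inr (hV x h.1 h.2))
  have hnot : t ∈ F → t' ∈ F → False := fun h1 h2 => hntt (edge_of_mem hFL h1 h2)
  rw [h'.eq]
  refine sub_susp hL hflag h'.ne hnar hFL ?_ ?_
  · intro x hx
    rcases hpool x hx with rfl | rfl | rfl | rfl | rfl
    · exact Or.inr (Or.inr ⟨hta.symm hL, hr't⟩)
    · exact Or.inr (Or.inr ⟨ht'a.symm hL, hrt2⟩)
    · exact Or.inl rfl
    · exact Or.inr (Or.inr ⟨hab, hr'b⟩)
    · exact Or.inr (Or.inl rfl)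
  · intro x hx y hy z hz hxy hxz hyz h1 h2 h3 h4 h5 h6
    have px := hpool x hx
    have py := hpool y hy
    have pz := hpool z hz
    clear hpool hV hF
    grind

/-- If the bases have a common further vertex `c`, then `S` lies in the suspension of `b`, `c`. -/
theorem case_common (hL : IsLabeledS2 L m) (hflag : MetricFlag L m) {S : Set (Finset E3)}
    {t t' a b r' c : E3} (h : Cfg L m S t t')
    (hta : Nb L m t a) (htb : Nb L m t b) (ht'a : Nb L m t' a) (ht'b : Nb L m t' b)
    (hab : Nb L m a b) (hr't : Nb L m r' t) (hr'b : Nb L m r' b)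
    (htc : Nb L m t c) (ht'c : Nb L m t' c) (hac : Nb L m a c) (hr'c : Nb L m r' c)
    (hbc : b ≠ c) (har : a ≠ r') (hrt : r' ≠ t') (hf : ({a, b, t} : Finset E3) ∈ L.faces)
    (hntt : ({t, t'} : Finset E3) ∉ L.faces) (hnar : ({a, r'} : Finset E3) ∉ L.faces)
    (hnbc : ({b, c} : Finset E3) ∉ L.faces) : S = susp L m b c := by
  refine h.max _ ⟨_, _, _, susp_data hbc (htb.symm hL) (htc.symm hL)⟩ fun F hF => ?_
  have hFL : F ∈ L.faces := (h.data hta ht'a).subset hF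
  rw [h.eq] at hF
  have hpool : ∀ x ∈ F, x = t ∨ x = t' ∨ x = a ∨ x = b ∨ x = c ∨ x = r' := by
    intro x hx
    rcases susp_mem hF hx with hh | hh | hh
    · exact Or.inl hh
    · exact Or.inr (Or.inl hh)
    · right; right
      by_contra hcon
      push Not at hcon
      refine no_skeleton_config hL.sphere t b c a r' t' x ?_ hf hta.2.1 hr't.edge' hh.1.2.1
        hh.2.edge' hab.edge' hr'b.edge' ht'b.edge' hac.edge' hr'c.edge' ht'c.edge'
      have h1 := h.ne
      have := hta.1; have := htb.1; have := ht'a.1; have := ht'b.1; have := hab.1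
      have := hr't.1; have := hr'b.1; have := htc.1; have := ht'c.1; have := hac.1
      have := hr'c.1; have := hh.1.1; have := hh.2.1
      simp only [List.nodup_cons, List.mem_cons, List.not_mem_nil, or_false, not_or,
        List.nodup_nil, not_false_eq_true, and_true]
      refine ⟨⟨?_, ?_, ?_, ?_, ?_, ?_⟩, ⟨?_, ?_, ?_, ?_, ?_⟩, ⟨?_, ?_, ?_, ?_⟩, ⟨?_, ?_, ?_⟩,
        ⟨?_, ?_⟩, ?_⟩ <;> first | assumption | (apply Ne.symm; assumption) | tauto
  have hnot : t ∈ F → t' ∈ F → False := fun h1 h2 => hntt (edge_of_mem hFL h1 h2)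
  have hnot' : a ∈ F → r' ∈ F → False := fun h1 h2 => hnar (edge_of_mem hFL h1 h2)
  refine sub_susp hL hflag hbc hnbc hFL ?_ ?_
  · intro x hx
    rcases hpool x hx with rfl | rfl | rfl | rfl | rfl | rfl
    · exact Or.inr (Or.inr ⟨htb.symm hL, htc.symm hL⟩)
    · exact Or.inr (Or.inr ⟨ht'b.symm hL, ht'c.symm hL⟩)
    · exact Or.inr (Or.inr ⟨hab.symm hL, hac.symm hL⟩)
    · exact Or.inl rfl
    · exact Or.inr (Or.inl rfl)
    · exact Or.inr (Or.inr ⟨hr'b.symm hL, hr'c.symm hL⟩)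
  · intro x hx y hy z hz hxy hxz hyz h1 h2 h3 h4 h5 h6
    have px := hpool x hx
    have py := hpool y hy
    have pz := hpool z hz
    clear hpool hF
    grind

theorem case_cross (hL : IsLabeledS2 L m) (hflag : MetricFlag L m) {S S' : Set (Finset E3)}
    {t t' a b r' : E3} (h : Cfg L m S t t') (h' : Cfg L m S' a r') (hne : a ≠ b) (hne' : t ≠ b)
    (hZ : ({a, b} : Finset E3) ∈ baseZ L m t t') (hZ' : ({t, b} : Finset E3) ∈ baseZ L m a r') :
    S = S' := by
  obtain ⟨hta, ht'a⟩ := hZ.2.1 a (by simp)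
  obtain ⟨htb, ht'b⟩ := hZ.2.1 b (by simp)
  obtain ⟨hat, hr't⟩ := hZ'.2.1 t (by simp)
  obtain ⟨hab, hr'b⟩ := hZ'.2.1 b (by simp)
  have hf : ({a, b, t} : Finset E3) ∈ L.faces :=
    sub_face hZ.2.2.1 (by intro z; simp; tauto) (by simp)
  have hf2 : ({t, b, a} : Finset E3) ∈ L.faces :=
    sub_face hZ.2.2.1 (by intro z; simp; tauto) (by simp)
  have habt' : ({a, b, t'} : Finset E3) ∈ L.faces :=
    sub_face hZ.2.2.2 (by intro z; simp; tauto) (by simp)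
  have htbr' : ({t, b, r'} : Finset E3) ∈ L.faces :=
    sub_face hZ'.2.2.2 (by intro z; simp; tauto) (by simp)
  obtain ⟨c, hca, hcb, htc, ht'c⟩ := third_vertex h.inf (h.data hta ht'a).zdown hne hZ
  obtain ⟨c', hct, hcb', hac', hrc2⟩ := third_vertex h'.inf (h'.data hat hr't).zdown hne' hZ'
  have hrt : r' ≠ t' := by
    rintro rfl
    have hE := hr't.edge'
    have key : ∀ x, Nb L m t x → Nb L m r' x → ({t, r', x} : Finset E3) ∈ L.faces := fun x h1 h2 =>
      sub_face (tri hL hflag (h1.symm hL) (h2.symm hL) h.ne hE) (by intro z; simp; tauto) (by simp)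
    exact book hL h.ne hne hca.symm hcb.symm hta.1.symm ht'a.1.symm htb.1.symm ht'b.1.symm
      htc.1.symm ht'c.1.symm (key a hta ht'a) (key b htb ht'b) (key c htc ht'c)
  have hnar : ({a, r'} : Finset E3) ∉ L.faces := by
    intro hE
    have : ({a, b, r'} : Finset E3) ∈ L.faces :=
      sub_face (tri hL hflag (hab.symm hL) (hr'b.symm hL) h'.ne hE) (by intro z; simp; tauto)
        (by simp)
    exact book hL hne h.ne hr't.1.symm hrt.symm hta.1 htb.1 ht'a.1 ht'b.1 h'.ne.symm hr'b.1
      hf habt' this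
  have hntt : ({t, t'} : Finset E3) ∉ L.faces := by
    intro hE
    have : ({t, b, t'} : Finset E3) ∈ L.faces :=
      sub_face (tri hL hflag (htb.symm hL) (ht'b.symm hL) h.ne hE) (by intro z; simp; tauto)
        (by simp)
    exact book hL hne' h'.ne ht'a.1.symm hrt hat.1 hne hr't.1 hr'b.1 h.ne.symm ht'b.1
      hf2 htbr' this
  by_cases hD : ∃ d, d ≠ a ∧ d ≠ b ∧ Nb L m t d ∧ Nb L m t' d ∧ d ≠ t ∧ Nb L m a d ∧ Nb L m r' d
  · obtain ⟨d, hda, hdb, htd, ht'd, hdt, had, hr'd⟩ := hD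
    have hnbd : ({b, d} : Finset E3) ∉ L.faces := by
      intro hE
      exact book hL hne h.ne htd.1 ht'd.1 hta.1 htb.1 ht'a.1 ht'b.1 hda hdb hf habt'
        (tri hL hflag hab had hdb.symm hE)
    rw [case_common hL hflag h hta htb ht'a ht'b hab hr't hr'b htd ht'd had hr'd hdb.symm h'.ne hrt
      hf hntt hnar hnbd,
      case_common hL hflag h' hat hab hr't hr'b htb ht'a ht'b had hr'd htd ht'd hdb.symm h.ne
      hrt.symm hf2 hnar hntt hnbd]
  have key : ∀ d d', d ≠ a → d ≠ b → Nb L m t d → Nb L m t' d → d' ≠ t → d' ≠ b → Nb L m a d' →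
      Nb L m r' d' → d = r' ∨ d' = t' := by
    intro d d' hda hdb htd ht'd hdt' hdb' had' hrd2
    by_contra hcon
    push Not at hcon
    have hdd : d ≠ d' := by
      rintro rfl
      exact hD ⟨d, hda, hdb, htd, ht'd, hdt', had', hrd2⟩
    refine no_triangle_config hL.sphere a b t r' t' d d' ?_ hf had'.2.1 hrd2.edge' ht'a.edge'
      hr'b.edge' ht'b.edge' hr't.edge' htd.2.1 ht'd.edge'
    have := h.ne; have := h'.ne
    have := hta.1; have := htb.1; have := ht'a.1; have := ht'b.1; have := hab.1
    have := hr't.1; have := hr'b.1; have := htd.1; have := ht'd.1; have := had'.1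
    have := hrd2.1
    simp only [List.nodup_cons, List.mem_cons, List.not_mem_nil, or_false, not_or,
      List.nodup_nil, not_false_eq_true, and_true]
    refine ⟨⟨?_, ?_, ?_, ?_, ?_, ?_⟩, ⟨?_, ?_, ?_, ?_, ?_⟩, ⟨?_, ?_, ?_, ?_⟩, ⟨?_, ?_, ?_⟩,
      ⟨?_, ?_⟩, ?_⟩ <;> first | assumption | (apply Ne.symm; assumption) | tauto
  by_cases hV : ∀ d, Nb L m t d → Nb L m t' d → d = a ∨ d = b ∨ d = r'
  · have hcr : c = r' := by have := hV c htc ht'c; tauto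
    subst hcr
    exact case_small hL hflag h h' hta htb ht'a ht'b hab hr't hr'b (ht'c.symm hL) hntt hnar hV
  · push Not at hV
    obtain ⟨d, htd, ht'd, hda, hdb, hdr⟩ := hV
    have hV' : ∀ d', Nb L m a d' → Nb L m r' d' → d' = t ∨ d' = b ∨ d' = t' := by
      intro d' h1 h2
      by_contra hcon
      push Not at hcon
      rcases key d d' hda hdb htd ht'd hcon.1 hcon.2.1 h1 h2 with h3 | h3
      · exact hdr h3
      · exact hcon.2.2 h3
    have hct' : c' = t' := by have := hV' c' hac' hrc2; tauto
    subst hct'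
    exact (case_small hL hflag h' h hat hab hr't hr'b htb ht'a ht'b (hrc2.symm hL) hnar hntt
      hV').symm

theorem unique_susp (hL : IsLabeledS2 L m) (hflag : MetricFlag L m) {S S' : Set (Finset E3)}
    (h : IsInfMaxRASusp L m S) (h' : IsInfMaxRASusp L m S') {F : Finset E3} (hF : F ∈ S)
    (hF' : F ∈ S') (hc : F.card = 3) : S = S' := by
  obtain ⟨t₀, t₁, h⟩ := exists_cfg h
  obtain ⟨r₀, r₁, h'⟩ := exists_cfg h'
  obtain ⟨t, t', a, b, h, hab, hZ, rfl⟩ := face_form hL h hF hc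
  obtain ⟨r, r', a', b', h', hab', hZ', he⟩ := face_form hL h' hF' hc
  obtain ⟨hta, ht'a⟩ := hZ.2.1 a (by simp)
  obtain ⟨htb, ht'b⟩ := hZ.2.1 b (by simp)
  have hrn : r ∉ ({a', b'} : Finset E3) := fun h => (hZ'.2.1 r h).1.1 rfl
  have he' : ({a', b'} : Finset E3) = ({t, a, b} : Finset E3).erase r := by
    rw [he, Finset.erase_insert hrn]
  have hr : r = t ∨ r = a ∨ r = b := by
    have : r ∈ ({t, a, b} : Finset E3) := by rw [he]; simp
    simpa using this
  have hta' := hta.1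
  have htb' := htb.1
  rcases hr with rfl | rfl | rfl
  · have e : ({a', b'} : Finset E3) = {a, b} := by
      rw [he']; ext z; simp only [Finset.mem_erase, Finset.mem_insert, Finset.mem_singleton]; grind
    rw [e] at hZ'
    obtain ⟨-, hr'a⟩ := hZ'.2.1 a (by simp)
    obtain ⟨-, hr'b⟩ := hZ'.2.1 b (by simp)
    by_cases hrt : t' = r'
    · rw [h.eq, h'.eq, hrt]
    · exfalso
      refine book hL hab h.ne h'.ne hrt hta.1 htb.1 ht'a.1 ht'b.1 hr'a.1 hr'b.1 ?_ ?_ ?_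
      · exact sub_face hZ.2.2.1 (by intro z; simp; tauto) (by simp)
      · exact sub_face hZ.2.2.2 (by intro z; simp; tauto) (by simp)
      · exact sub_face hZ'.2.2.2 (by intro z; simp; tauto) (by simp)
  · have e : ({a', b'} : Finset E3) = {t, b} := by
      rw [he']; ext z; simp only [Finset.mem_erase, Finset.mem_insert, Finset.mem_singleton]; grind
    rw [e] at hZ'
    exact case_cross hL hflag h h' hab htb' hZ hZ'
  · have e : ({a', b'} : Finset E3) = {t, a} := by
      rw [he']; ext z; simp only [Finset.mem_erase, Finset.mem_insert, Finset.mem_singleton]; grind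
    rw [e] at hZ'
    rw [Finset.pair_comm] at hZ
    exact case_cross hL hflag h h' hab.symm hta' hZ hZ'

theorem class_eq {S₁ S₂ : Set (Finset E3)}
    (h : Relation.EqvGen (SeifertRel L m) S₁ S₂) :
    {S | IsInfMaxRASusp L m S ∧ Relation.EqvGen (SeifertRel L m) S₁ S} =
      {S | IsInfMaxRASusp L m S ∧ Relation.EqvGen (SeifertRel L m) S₂ S} := by
  ext S
  exact ⟨fun hS => ⟨hS.1, (h.symm _ _).trans _ _ _ hS.2⟩, fun hS => ⟨hS.1, h.trans _ _ _ hS.2⟩⟩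

end CoxOrb

open CoxOrb

/-- Two distinct Seifert subcomplexes of a metric flag labeled triangulation of
the 2-sphere contain no common 2-simplex of `L`. -/
theorem seifert_no_common_two_simplex
    (L : SimplicialComplex ℝ E3) (m : E3 → E3 → ℕ)
    (hL : IsLabeledS2 L m) (hflag : MetricFlag L m)
    (D₁ D₂ : Set (Finset E3))
    (h₁ : IsSeifertSubcomplex L m D₁) (h₂ : IsSeifertSubcomplex L m D₂)
    (hne : D₁ ≠ D₂) :
    ∀ F ∈ L.faces, F.card = 3 → ¬ (F ∈ D₁ ∧ F ∈ D₂) := by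
  rintro F - hc ⟨hF₁, hF₂⟩
  obtain ⟨S₁, -, rfl⟩ := h₁
  obtain ⟨S₂, -, rfl⟩ := h₂
  obtain ⟨S, ⟨hS, hr⟩, hF⟩ := hF₁
  obtain ⟨S', ⟨hS', hr'⟩, hF'⟩ := hF₂
  have hSS := unique_susp hL hflag hS hS' hF hF' hc
  subst hSS
  exact hne (congrArg _ (class_eq (hr.trans _ _ _ (hr'.symm _ _))))
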